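/- Let ρ ≥ 1 and let (X, D) be a ρ-metric space. Let P ⊆ X be a finite set with weight function w : P → (0,∞), let k ≥ 1 be an integer, and let p ↦ p' be a map from P into a finite set B ⊆ X such that Σ_{q∈P} w(q)·D(q, q') ≤ α·OPT_k(P, w), where α ≥ 0, and assume Σ_{q∈P} w(q)·D(q, q') > 0. For b ∈ B let P_b := {q ∈ P : q' = b}. Then for every p ∈ P with p ∈ P_b and every subset C ⊆ X with 1 ≤ |C| ≤ k such that Σ_{q∈P} w(q)·D(q, C) > 0, one has w(p)·D(p, C) / Σ_{q∈P} w(q)·D(q, C) ≤ ρ·α·w(p)·D(p, p') / Σ_{q∈P} w(q)·D(q, q') + ρ²·(α + 1)·w(p) / Σ_{q∈P_b} w(q). -/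

import Mathlib

open Finset

/-- Distance from a point to a finite set of centers: `D(x,C) = min_{c ∈ C} D(x,c)`. -/
noncomputable def distToSet {X : Type*} (D : X → X → ℝ) (x : X) (C : Finset X) : ℝ :=
  sInf ((fun c => D x c) '' C)

/-- `OPT_k(P, w)`: the minimum over all center sets `C ⊆ X` with `1 ≤ |C| ≤ k` of the
weighted clustering cost `∑_{p ∈ P} w p · D(p, C)`. -/
noncomputable def OPTk {X : Type*} (D : X → X → ℝ) (P : Finset X) (w : X → ℝ) (k : ℕ) : ℝ :=
  sInf { c : ℝ | ∃ C : Finset X, C.Nonempty ∧ C.card ≤ k ∧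
    c = ∑ p ∈ P, w p * distToSet D p C }

theorem distToSet_le {X : Type*} (D : X → X → ℝ) (x : X) {C : Finset X} {c : X} (hc : c ∈ C) :
    distToSet D x C ≤ D x c :=
  csInf_le (C.finite_toSet.image _).bddBelow ⟨c, hc, rfl⟩

theorem exists_distToSet_eq {X : Type*} (D : X → X → ℝ) (x : X) {C : Finset X}
    (hC : C.Nonempty) : ∃ c ∈ C, distToSet D x C = D x c := by
  obtain ⟨c, hc, h⟩ : distToSet D x C ∈ (fun c => D x c) '' (C : Set X) :=
    (hC.to_set.image _).csInf_mem (C.finite_toSet.image _)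
  exact ⟨c, hc, h.symm⟩

theorem distToSet_nonneg {X : Type*} {D : X → X → ℝ} (hnonneg : ∀ x y, 0 ≤ D x y) (x : X)
    (C : Finset X) : 0 ≤ distToSet D x C := by
  refine Real.sInf_nonneg ?_
  rintro _ ⟨c, -, rfl⟩
  exact hnonneg x c

theorem distToSet_le_mul_add {X : Type*} {D : X → X → ℝ} {ρ : ℝ}
    (htri : ∀ x y z, D x z ≤ ρ * (D x y + D y z)) (x y : X) {C : Finset X} (hC : C.Nonempty) :
    distToSet D x C ≤ ρ * (D x y + distToSet D y C) := by
  obtain ⟨c, hc, h⟩ := exists_distToSet_eq D y hC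
  rw [h]
  exact (distToSet_le D x hc).trans (htri x y c)

theorem OPTk_le {X : Type*} {D : X → X → ℝ} (hnonneg : ∀ x y, 0 ≤ D x y)
    {P : Finset X} {w : X → ℝ} (hw : ∀ p ∈ P, 0 ≤ w p) {k : ℕ} {C : Finset X}
    (hC : C.Nonempty) (hCk : C.card ≤ k) :
    OPTk D P w k ≤ ∑ p ∈ P, w p * distToSet D p C := by
  refine csInf_le ⟨0, ?_⟩ ⟨C, hC, hCk, rfl⟩
  rintro _ ⟨C', -, -, rfl⟩
  exact sum_nonneg fun q hq => mul_nonneg (hw q hq) (distToSet_nonneg hnonneg q C')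

/-- Weighted sensitivity bound (Lemma `sensbound`): if `p ↦ p'` maps `P` into a finite set
`B` with weighted connection cost at most `α·OPT_k(P,w)`, then for every `p ∈ P` lying in
cluster `P_b` (with `b = p'`) and every query `C` with `1 ≤ |C| ≤ k`,
`w(p)·D(p,C) / ∑_q w(q)·D(q,C) ≤ ρ·α·w(p)·D(p,p') / ∑_q w(q)·D(q,q')
  + ρ²·(α+1)·w(p) / ∑_{q ∈ P_b} w(q)`. -/
theorem weighted_sensitivity_bound {X : Type*} [DecidableEq X] (D : X → X → ℝ) (ρ : ℝ)
    (hρ1 : 1 ≤ ρ)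
    (hsymm : ∀ x y, D x y = D y x) (hnonneg : ∀ x y, 0 ≤ D x y)
    (htri : ∀ x y z, D x z ≤ ρ * (D x y + D y z))
    (P : Finset X) (w : X → ℝ) (hw : ∀ p ∈ P, 0 < w p)
    (k : ℕ) (hk : 1 ≤ k)
    (B : Finset X) (π : X → X) (α : ℝ) (hα : 0 ≤ α)
    (hπB : ∀ p ∈ P, π p ∈ B)
    (hπcost : ∑ q ∈ P, w q * D q (π q) ≤ α * OPTk D P w k)
    (hπpos : 0 < ∑ q ∈ P, w q * D q (π q)) :
    ∀ p ∈ P, ∀ b ∈ B, π p = b →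
      ∀ C : Finset X, C.Nonempty → C.card ≤ k →
        0 < (∑ q ∈ P, w q * distToSet D q C) →
        w p * distToSet D p C / (∑ q ∈ P, w q * distToSet D q C) ≤
          ρ * α * (w p * D p (π p)) / (∑ q ∈ P, w q * D q (π q)) +
            ρ ^ 2 * (α + 1) * w p / (∑ q ∈ P.filter fun q => π q = b, w q) := by
  intro p hp b _ hpb C hC hCk hS
  subst hpb
  have hρ : 0 ≤ ρ := zero_le_one.trans hρ1
  have hAS := hπcost.trans
    (mul_le_mul_of_nonneg_left (OPTk_le hnonneg (fun q hq => (hw q hq).le) hC hCk) hα)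
  have hW : 0 < ∑ q ∈ P.filter fun q => π q = π p, w q :=
    sum_pos (fun q hq => hw q (mem_filter.1 hq).1) ⟨p, mem_filter.2 ⟨hp, rfl⟩⟩
  have hcluster : (∑ q ∈ P.filter fun q => π q = π p, w q) * distToSet D (π p) C ≤
      ρ * ((∑ q ∈ P, w q * D q (π q)) + ∑ q ∈ P, w q * distToSet D q C) := by
    rw [← sum_add_distrib, mul_sum, sum_mul]
    refine (sum_le_sum fun q hq => ?_).trans
      (sum_le_sum_of_subset_of_nonneg (filter_subset _ P) fun q hq _ => ?_)
    · obtain ⟨hqP, hq⟩ := mem_filter.1 hq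
      have h := mul_le_mul_of_nonneg_left
        (distToSet_le_mul_add htri (π p) q hC) (hw q hqP).le
      rw [hq, hsymm q (π p)]
      linarith
    · exact mul_nonneg hρ (add_nonneg (mul_nonneg (hw q hq).le (hnonneg _ _))
        (mul_nonneg (hw q hq).le (distToSet_nonneg hnonneg q C)))
  have hp_tri := distToSet_le_mul_add htri p (π p) hC
  have hwp := hw p hp
  have hDp := hnonneg p (π p)
  generalize (∑ q ∈ P.filter fun q => π q = π p, w q) = W at *
  generalize (∑ q ∈ P, w q * D q (π q)) = A at *
  generalize (∑ q ∈ P, w q * distToSet D q C) = S at *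
  have hcenter : distToSet D (π p) C ≤ ρ * (α + 1) * S / W := by
    rw [le_div_iff₀ hW]
    nlinarith [mul_le_mul_of_nonneg_left hAS hρ]
  have hone : 1 ≤ α * S / A := (one_le_div hπpos).2 hAS
  rw [div_le_iff₀ hS]
  calc w p * distToSet D p C
      ≤ w p * (ρ * (D p (π p) * (α * S / A) + ρ * (α + 1) * S / W)) := by
        refine mul_le_mul_of_nonneg_left (hp_tri.trans ?_) hwp.le
        exact mul_le_mul_of_nonneg_left
          (add_le_add (le_mul_of_one_le_right hDp hone) hcenter) hρ
    _ = _ := by ring
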